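/- arXiv:1806.05966 — 7 statements merged into one kernel-verified Lean document; each statement's English description precedes it below -/
import Mathlib

section
/- Let A : Type u be coreduced and B : A → Type u a family such that B a is coreduced for every a : A. Then the dependent sum Σ a : A, B a is coreduced. -/
/-! The unit of the sum type has a retraction `z ↦ ⟨p z, q z⟩`, obtained by extending the two
projections along the unit with the existence half of the modality axiom. The uniqueness half
then forces this retraction to be a two-sided inverse. -/

universe u

/-- If `A` is coreduced and every `B a` is coreduced, then `Σ a, B a` is
coreduced. -/
theorem statement3 (ℑ : Type u → Type u) (ι : ∀ A : Type u, A → ℑ A)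
    (mod : ∀ (A : Type u) (B : ℑ A → Type u),
      Function.Bijective (fun (s : ∀ a : ℑ A, ℑ (B a)) => fun a : A => s (ι A a)))
    (A : Type u) (hA : Function.Bijective (ι A))
    (B : A → Type u) (hB : ∀ a : A, Function.Bijective (ι (B a))) :
    Function.Bijective (ι (Σ a : A, B a)) := by
  -- The first projection extends along the unit, because `A` is coreduced.
  obtain ⟨p, hp⟩ : ∃ p : ℑ (Σ a : A, B a) → A, ∀ x, p (ι _ x) = x.1 := by
    obtain ⟨s, hs⟩ := (mod (Σ a : A, B a) (fun _ => A)).2 (fun x => ι A x.1)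
    refine ⟨fun z => (Equiv.ofBijective _ hA).symm (s z), fun x => ?_⟩
    rw [Equiv.symm_apply_eq]
    exact congrFun hs x
  -- The second projection extends to a section of the pulled-back family `B ∘ p`.
  obtain ⟨q, hq⟩ : ∃ q : ∀ z, B (p z), ∀ x, q (ι _ x) = (hp x).symm ▸ x.2 := by
    obtain ⟨s, hs⟩ := (mod (Σ a : A, B a) (fun z => B (p z))).2
      (fun x => ι (B (p (ι _ x))) ((hp x).symm ▸ x.2))
    refine ⟨fun z => (Equiv.ofBijective _ (hB (p z))).symm (s z), fun x => ?_⟩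
    rw [Equiv.symm_apply_eq]
    exact congrFun hs x
  have hr : Function.LeftInverse (fun z => (⟨p z, q z⟩ : Σ a : A, B a)) (ι _) := by
    intro x
    refine Sigma.ext (hp x) ?_
    simp only [hq]
    exact eqRec_heq _ _
  refine ⟨hr.injective, fun z => ⟨⟨p z, q z⟩, ?_⟩⟩
  -- `ι ∘ ⟨p, q⟩` and the identity are endomaps of `ℑ (Σ a, B a)` that agree on the
  -- image of `ι`, so the uniqueness half of `mod` identifies them.
  have key : (fun z => ι (Σ a : A, B a) ⟨p z, q z⟩) = fun z => z :=
    (mod (Σ a : A, B a) (fun _ => Σ a : A, B a)).1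
      (funext fun x => congrArg (ι _) (hr x))
  exact congrFun key z
end

section
/- Let A : Type u and B : ℑ A → Type u. The unique map F : ℑ (Σ x : A, B (ι_A x)) → (Σ x : ℑ A, ℑ (B x)) satisfying F (ι ⟨x, b⟩) = ⟨ι_A x, ι b⟩ for all x : A and b : B (ι_A x) (which exists since the codomain is coreduced) is bijective. In particular ℑ (Σ x : A, B (ι_A x)) ≃ Σ x : ℑ A, ℑ (B x). -/
universe u

/-!
Call a type `C` retractable if the unit `ι C` has a left inverse `ℑ C → C`. Dependent
elimination out of `ℑ A` holds, with existence (`Retractable.elim`) and uniqueness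
(`Retractable.uniq`), for every family of retractable types: transfer sections along the units
and the retractions. Retractable types include every `ℑ A`, are closed under `X → _`, and include
`Σ x : ℑ A, ℑ (B x)`.

By elimination in both variables there is a map `h x : ℑ (B x) → ℑ (Σ x : A, B (ι A x))`, for
`x : ℑ A`, with `h (ι a) (ι b) = ι ⟨a, b⟩`. The induced map out of `Σ x : ℑ A, ℑ (B x)` is
inverse to `F`: both composites agree with the identity on elements built from units, hence
everywhere by uniqueness.
-/

/-- The unit `ι C : C → ℑ C` has a left inverse. For a modality this is equivalent to `C` being
coreduced, but only the left inverse is needed. -/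
def Retractable (ℑ : Type u → Type u) (ι : ∀ A : Type u, A → ℑ A) (C : Type u) : Prop :=
  ∃ r : ℑ C → C, ∀ c, r (ι C c) = c

/-- The hypothesis that `ℑ` with units `ι` is a modality. -/
def IsModality (ℑ : Type u → Type u) (ι : ∀ A : Type u, A → ℑ A) : Prop :=
  ∀ (A : Type u) (B : ℑ A → Type u),
    Function.Bijective (fun (s : ∀ a : ℑ A, ℑ (B a)) => fun a : A => s (ι A a))

section

variable {ℑ : Type u → Type u} {ι : ∀ A : Type u, A → ℑ A}

theorem Retractable.elim (mod : IsModality ℑ ι) {A : Type u} {C : ℑ A → Type u}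
    (hC : ∀ x, Retractable ℑ ι (C x)) (f : ∀ a : A, C (ι A a)) :
    ∃ g : ∀ x, C x, ∀ a, g (ι A a) = f a := by
  choose r hr using hC
  obtain ⟨s, hs⟩ := (mod A C).2 (fun a => ι _ (f a))
  refine ⟨fun x => r x (s x), fun a => ?_⟩
  have h : s (ι A a) = ι _ (f a) := congrFun hs a
  simp only [h, hr]

theorem Retractable.uniq (mod : IsModality ℑ ι) {A : Type u} {C : ℑ A → Type u}
    (hC : ∀ x, Retractable ℑ ι (C x)) {g g' : ∀ x, C x}
    (h : ∀ a, g (ι A a) = g' (ι A a)) (x : ℑ A) : g x = g' x := by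
  choose r hr using hC
  have e : (fun x => ι _ (g x)) = fun x => ι _ (g' x) :=
    (mod A C).1 (funext fun a => congrArg (ι _) (h a))
  rw [← hr x (g x), ← hr x (g' x)]
  exact congrArg (r x) (congrFun e x)

theorem Retractable.of_modality (mod : IsModality ℑ ι) (A : Type u) :
    Retractable ℑ ι (ℑ A) := by
  obtain ⟨s, hs⟩ := (mod (ℑ A) (fun _ => A)).2 id
  exact ⟨s, fun c => congrFun hs c⟩

/-- The retraction is computed pointwise, by extending each evaluation map. -/
theorem Retractable.arrow (mod : IsModality ℑ ι) (X : Type u) {Y : Type u}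
    (hY : Retractable ℑ ι Y) : Retractable ℑ ι (X → Y) := by
  choose g hg using fun x : X =>
    Retractable.elim mod (A := X → Y) (C := fun _ => Y) (fun _ => hY) (fun f => f x)
  exact ⟨fun z x => g x z, fun f => funext fun x => hg x f⟩

/-- The first component of the retraction extends the first projection; the second is obtained
by dependent elimination over it. -/
theorem Retractable.sigma (mod : IsModality ℑ ι) (A : Type u) (B : ℑ A → Type u) :
    Retractable ℑ ι (Σ x : ℑ A, ℑ (B x)) := by
  obtain ⟨p, hp⟩ := Retractable.elim mod (A := Σ x : ℑ A, ℑ (B x)) (C := fun _ => ℑ A)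
    (fun _ => Retractable.of_modality mod A) Sigma.fst
  obtain ⟨q, hq⟩ := Retractable.elim mod (A := Σ x : ℑ A, ℑ (B x))
    (C := fun z => ℑ (B (p z))) (fun _ => Retractable.of_modality mod _)
    (fun s => cast (by rw [hp]) s.2)
  refine ⟨fun z => ⟨p z, q z⟩, fun c => Sigma.ext (hp c) ?_⟩
  simp only [hq]
  exact cast_heq _ _

end

/-- For `B : ℑ A → Type u`, the unique map
`F : ℑ (Σ x : A, B (ι_A x)) → Σ x : ℑ A, ℑ (B x)` with
`F (ι ⟨x, b⟩) = ⟨ι_A x, ι b⟩` is bijective. -/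
theorem statement6 (ℑ : Type u → Type u) (ι : ∀ A : Type u, A → ℑ A)
    (mod : ∀ (A : Type u) (B : ℑ A → Type u),
      Function.Bijective (fun (s : ∀ a : ℑ A, ℑ (B a)) => fun a : A => s (ι A a)))
    (A : Type u) (B : ℑ A → Type u)
    (F : ℑ (Σ x : A, B (ι A x)) → Σ x : ℑ A, ℑ (B x))
    (hF : ∀ (x : A) (b : B (ι A x)),
      F (ι _ ⟨x, b⟩) = ⟨ι A x, ι (B (ι A x)) b⟩) :
    Function.Bijective F := by
  have hR : ∀ X, Retractable ℑ ι (ℑ X) := Retractable.of_modality mod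
  have hS := Retractable.sigma mod A B
  choose k hk using fun a : A => Retractable.elim mod (A := B (ι A a))
    (C := fun _ => ℑ (Σ x : A, B (ι A x))) (fun _ => hR _) (fun b => ι _ ⟨a, b⟩)
  obtain ⟨h, hh⟩ := Retractable.elim mod (C := fun x => ℑ (B x) → ℑ (Σ x : A, B (ι A x)))
    (fun _ => Retractable.arrow mod _ (hR _)) k
  refine Function.bijective_iff_has_inverse.2 ⟨fun s => h s.1 s.2, fun z => ?_, ?_⟩
  · refine Retractable.uniq mod (C := fun _ => ℑ (Σ x : A, B (ι A x))) (fun _ => hR _)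
      (g := fun z => h (F z).1 (F z).2) (g' := fun z => z) ?_ z
    rintro ⟨a, b⟩
    rw [hF, hh, hk]
  · rintro ⟨x, y⟩
    -- Eliminate `x` with `y` still universally quantified, since the type of `y` depends on `x`.
    refine congrFun (Retractable.uniq mod (C := fun x => ℑ (B x) → Σ x : ℑ A, ℑ (B x))
      (fun _ => Retractable.arrow mod _ hS)
      (g := fun x y => F (h x y)) (g' := fun x y => ⟨x, y⟩) (fun a => funext fun y => ?_) x) y
    refine Retractable.uniq mod (C := fun _ => Σ x : ℑ A, ℑ (B x)) (fun _ => hS)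
      (g := fun y => F (h (ι A a) y)) (g' := fun y => ⟨ι A a, y⟩) (fun b => ?_) y
    rw [hh, hk, hF]
end

section
/- Let V : Type u carry a homogeneous structure (e, t, p) and let 𝔻_e be the formal disk at e. Then: (a) for every x : V there is an equivalence ψ_x : 𝔻_x ≃ 𝔻_e; (b) the formal disk bundle T∞ V is trivial with fiber 𝔻_e, i.e. there is a bijection T∞ V ≃ V × 𝔻_e which commutes with the projections to V. -/
/-!
Every map `f` preserves the relation `ι x = ι y`, because `ι ∘ f` factors through `ι`
(surjectivity of precomposition with `ι`, for a constant family). Hence the equivalence `t x`,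
which sends `e` to `x`, restricts to an equivalence of the formal disks at `e` and at `x`.
The inverses of these fiberwise equivalences assemble to the trivialization of the formal disk
bundle.
-/

universe u

/-- Every map preserves infinitesimal closeness: `ι ∘ f` extends along `ι`, so its value at a
point depends only on the image of that point under `ι`. -/
theorem unit_eq_of_unit_eq (ℑ : Type u → Type u) (ι : ∀ A : Type u, A → ℑ A)
    (mod : ∀ (A : Type u) (B : ℑ A → Type u),
      Function.Bijective (fun (s : ∀ a : ℑ A, ℑ (B a)) => fun a : A => s (ι A a)))
    {A B : Type u} (f : A → B) {x y : A} (h : ι A x = ι A y) :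
    ι B (f x) = ι B (f y) := by
  obtain ⟨s, hs⟩ := (mod A (fun _ => B)).2 (fun a => ι B (f a))
  have hs' : ∀ a, s (ι A a) = ι B (f a) := fun a => congrFun hs a
  rw [← hs', ← hs', h]

/-- For a homogeneous type `V` with unit `e`: (a) every formal disk `𝔻_x` is
equivalent to `𝔻_e`; (b) the formal disk bundle `T∞ V` is trivial with fiber
`𝔻_e`, compatibly with the projections to `V`. -/
theorem statement7 (ℑ : Type u → Type u) (ι : ∀ A : Type u, A → ℑ A)
    (mod : ∀ (A : Type u) (B : ℑ A → Type u),
      Function.Bijective (fun (s : ∀ a : ℑ A, ℑ (B a)) => fun a : A => s (ι A a)))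
    (V : Type u) (e : V) (t : V → (V ≃ V)) (p : ∀ x : V, t x e = x) :
    (∃ _ : ∀ x : V, {y : V // ι V y = ι V x} ≃ {y : V // ι V y = ι V e}, True) ∧
    (∃ Φ : (Σ x : V, {y : V // ι V y = ι V x}) ≃ V × {y : V // ι V y = ι V e},
      ∀ z : Σ x : V, {y : V // ι V y = ι V x}, (Φ z).1 = z.1) := by
  have ψ : ∀ x : V, {y : V // ι V y = ι V x} ≃ {y : V // ι V y = ι V e} := fun x =>
    ((t x).subtypeEquiv fun y => by
      constructor
      · intro h
        have := unit_eq_of_unit_eq ℑ ι mod (t x) h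
        rwa [p x] at this
      · intro h
        have := unit_eq_of_unit_eq ℑ ι mod (t x).symm h
        rwa [Equiv.symm_apply_apply, (Equiv.symm_apply_eq (t x)).2 (p x).symm] at this).symm
  exact ⟨⟨ψ, trivial⟩, (Equiv.sigmaCongrRight ψ).trans (Equiv.sigmaEquivProd _ _), fun _ => rfl⟩
end

section
/- Let f : A → B be formally étale. Then every fiber of f is coreduced: for all b : B, the subtype {a : A // f a = b} is coreduced. -/
/-!
To see that a type `E` is coreduced it suffices to find a retraction `r` of `ι E`: then `ι E ∘ r` and
the identity agree on the image of `ι E`, hence agree by the uniqueness of extensions.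
For the fiber `E` of `f` over `b`, let `p : ℑ E → ℑ A` extend `x ↦ ι A x`. With `F = ℑ f`, the maps
`F ∘ p` and the constant map `ι B b` agree on the image of `ι E`, so they are equal. Hence
`(p y, b)` lies in the pullback `ℑ A ×_{ℑ B} B` for every `y`, and since `f` is formally étale this pair
comes from a unique point of `A`, which lies in the fiber; this point is `r y`.
-/

universe u

/-- A map `f : A → B` is formally étale if for the (unique) lift
`F : ℑ A → ℑ B` of `f`, the naturality square is a pullback. -/
def IsEtale (ℑ : Type u → Type u) (ι : ∀ A : Type u, A → ℑ A)
    {A B : Type u} (f : A → B) : Prop :=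
  ∀ (F : ℑ A → ℑ B) (h : ∀ a : A, F (ι A a) = ι B (f a)),
    Function.Bijective (fun a : A =>
      (⟨(ι A a, f a), h a⟩ : {w : ℑ A × B // F w.1 = ι B w.2}))

/-- All fibers of a formally étale map are coreduced. -/
theorem statement10 (ℑ : Type u → Type u) (ι : ∀ A : Type u, A → ℑ A)
    (mod : ∀ (A : Type u) (B : ℑ A → Type u),
      Function.Bijective (fun (s : ∀ a : ℑ A, ℑ (B a)) => fun a : A => s (ι A a)))
    {A B : Type u} (f : A → B) (hf : IsEtale ℑ ι f) :
    ∀ b : B, Function.Bijective (ι {a : A // f a = b}) := by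
  intro b
  have ext_maps : ∀ {X Y : Type u} (g h : ℑ X → ℑ Y), (∀ x, g (ι X x) = h (ι X x)) → g = h :=
    fun {X Y} g h e => (mod X (fun _ => Y)).1 (funext e)
  obtain ⟨F, hF⟩ := (mod A (fun _ => B)).2 (fun a => ι B (f a))
  replace hF : ∀ a, F (ι A a) = ι B (f a) := congrFun hF
  obtain ⟨p, hp⟩ := (mod {a : A // f a = b} (fun _ => A)).2 (fun x => ι A x.1)
  replace hp : ∀ x : {a : A // f a = b}, p (ι _ x) = ι A x.1 := congrFun hp
  have hFp : (fun y => F (p y)) = fun _ => ι B b :=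
    ext_maps _ _ fun x => by rw [hp, hF, x.2]
  have lift_pt : ∀ y, ∃ a : A, ι A a = p y ∧ f a = b := by
    intro y
    obtain ⟨a, ha⟩ := (hf F hF).2 ⟨(p y, b), congrFun hFp y⟩
    have ha' := congrArg Subtype.val ha
    exact ⟨a, congrArg Prod.fst ha', congrArg Prod.snd ha'⟩
  choose r hr hrb using lift_pt
  have retr : ∀ x : {a : A // f a = b},
      (⟨r (ι _ x), hrb (ι _ x)⟩ : {a : A // f a = b}) = x := by
    intro x
    apply Subtype.ext
    apply (hf F hF).1
    apply Subtype.ext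
    exact Prod.ext ((hr _).trans (hp x)) ((hrb _).trans x.2.symm)
  have sect : (fun y => ι {a : A // f a = b} ⟨r y, hrb y⟩) = fun y => y :=
    ext_maps _ _ fun x => congrArg _ (retr x)
  exact ⟨Function.LeftInverse.injective (g := fun y => (⟨r y, hrb y⟩ : {a : A // f a = b})) retr,
    fun y => ⟨⟨r y, hrb y⟩, congrFun sect y⟩⟩
end

section
/- Let f : A → B be formally étale. Then: (a) for every x : A, the differential df_x : 𝔻_x → 𝔻_{f x} is bijective; (b) the square with top map T∞ f : T∞ A → T∞ B, ⟨x, d⟩ ↦ ⟨f x, df_x d⟩, vertical maps the projections π₁, and bottom map f, is a pullback square. -/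
/-!
A point `y` of the formal disk at `f x` satisfies `ι y = ι (f x) = F (ι x)`, so `(ι x, y)` lies in
the pullback of `F` and `ι B`. As `f` is étale, there is exactly one `a : A` with `ι a = ι x` and
`f a = y`, that is, exactly one point of the disk at `x` that `diff` sends to `y`. This is (a).
For (b), the projections exhibit `T∞ f` as a map over `f` which on the fibre over `x` is the
differential at `x`, and a map of bundles is a pullback square when it is bijective on fibres.
-/

universe u

/-- The differential of `f` at `a`, defined using a lift `F` of `f` and the
naturality equation `F ∘ ι_A = ι_B ∘ f`. -/
def diff (ℑ : Type u → Type u) (ι : ∀ A : Type u, A → ℑ A)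
    {A B : Type u} (f : A → B) (F : ℑ A → ℑ B)
    (hn : ∀ a : A, F (ι A a) = ι B (f a)) (a : A) :
    {x : A // ι A x = ι A a} → {y : B // ι B y = ι B (f a)} :=
  fun d => ⟨f d.1, by rw [← hn d.1, ← hn a, d.2]⟩

/-- A commuting square is a pullback square if the induced map to the canonical
pullback is bijective. -/
def IsPullbackSquare {X Y A B : Type u} (t : X → Y) (p : X → A) (q : Y → B)
    (f : A → B) (comm : ∀ x : X, f (p x) = q (t x)) : Prop :=
  Function.Bijective (fun x : X => (⟨(p x, t x), comm x⟩ : {w : A × Y // f w.1 = q w.2}))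

/-- For a formally étale `f`: (a) every differential `df_x` is bijective;
(b) the square with top `T∞ f`, vertical maps the projections, and bottom `f`
is a pullback square. -/
theorem statement11 (ℑ : Type u → Type u) (ι : ∀ A : Type u, A → ℑ A)
    (mod : ∀ (A : Type u) (B : ℑ A → Type u),
      Function.Bijective (fun (s : ∀ a : ℑ A, ℑ (B a)) => fun a : A => s (ι A a)))
    {A B : Type u} (f : A → B) (hf : IsEtale ℑ ι f)
    (F : ℑ A → ℑ B) (hn : ∀ a : A, F (ι A a) = ι B (f a)) :
    (∀ x : A, Function.Bijective (diff ℑ ι f F hn x)) ∧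
    IsPullbackSquare
      (fun z : Σ x : A, {y : A // ι A y = ι A x} =>
        (⟨f z.1, diff ℑ ι f F hn z.1 z.2⟩ : Σ x : B, {y : B // ι B y = ι B x}))
      (fun z => z.1) (fun z => z.1) f (fun _ => rfl) := by
  have hd : ∀ x : A, Function.Bijective (diff ℑ ι f F hn x) := by
    intro x
    obtain ⟨hinj, hsurj⟩ := hf F hn
    constructor
    · rintro ⟨a, ha⟩ ⟨b, hb⟩ hab
      have hfab : f a = f b := congrArg Subtype.val hab
      exact Subtype.ext (hinj (Subtype.ext (Prod.ext (ha.trans hb.symm) hfab)))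
    · rintro ⟨y, hy⟩
      obtain ⟨a, ha⟩ := hsurj ⟨(ι A x, y), (hn x).trans hy.symm⟩
      have ha' := congrArg Subtype.val ha
      exact ⟨⟨a, congrArg Prod.fst ha'⟩, Subtype.ext (congrArg Prod.snd ha')⟩
  refine ⟨hd, ?_, ?_⟩
  · rintro ⟨x, d⟩ ⟨x', d'⟩ h
    have h' := congrArg Subtype.val h
    obtain rfl : x = x' := congrArg Prod.fst h'
    have hdd : diff ℑ ι f F hn x d = diff ℑ ι f F hn x d' :=
      eq_of_heq (Sigma.mk.inj (congrArg Prod.snd h')).2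
    rw [(hd x).1 hdd]
  · rintro ⟨⟨x, ⟨b, e⟩⟩, h⟩
    obtain rfl : f x = b := h
    obtain ⟨d, rfl⟩ := (hd x).2 e
    exact ⟨⟨x, d⟩, rfl⟩
end

section
/- Formally étale maps are stable under pullback: let f : A → B be formally étale, let ψ : B' → B be any map, let A' := {w : B' × A // ψ w.1 = f w.2}, and let f' : A' → B' be the first projection. Then f' is formally étale. -/
/-!
Write `Ff`, `Fψ` for the images of `f`, `ψ` under the modality, `A'` for the pullback of `f` along
`ψ`, and `E` for the pullback of `Ff` along `Fψ`. Since `f` is the pullback of `Ff` along the unit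
of `B`, the projection `A' → B'` is the pullback of `E → ℑ B'` along the unit of `B'`. The point is
that `E` is then the reflection `ℑ A'`. What is needed of this is a map `g : E → ℑ A'` sending
the image of each element of `A'` to its unit. It is built fibrewise over `ℑ B'`: over a point
`ι b'` étaleness of `f` supplies it, and the modality axiom extends it to all of `ℑ B'`, because a
type of functions into `ℑ A'` is a retract of its reflection (`exists_eval`). By the
uniqueness part of the axiom, `g` is
a retraction of `ℑ A' → E`, which gives surjectivity of the comparison map; injectivity follows
directly from that of `f`.
-/

universe u

/-- Maps out of `ℑ X` into `ℑ Y` are determined by their restriction along the unit. -/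
theorem modal_ext {ℑ : Type u → Type u} {ι : ∀ A : Type u, A → ℑ A}
    (mod : ∀ (A : Type u) (B : ℑ A → Type u),
      Function.Bijective (fun (s : ∀ a : ℑ A, ℑ (B a)) => fun a : A => s (ι A a)))
    {X Y : Type u} (p q : ℑ X → ℑ Y) (h : ∀ x, p (ι X x) = q (ι X x)) (z : ℑ X) : p z = q z :=
  congrFun ((mod X (fun _ => Y)).1 (funext h : (fun x => p (ι X x)) = fun x => q (ι X x))) z

theorem modal_lift {ℑ : Type u → Type u} {ι : ∀ A : Type u, A → ℑ A}
    (mod : ∀ (A : Type u) (B : ℑ A → Type u),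
      Function.Bijective (fun (s : ∀ a : ℑ A, ℑ (B a)) => fun a : A => s (ι A a)))
    {X Y : Type u} (p : X → ℑ Y) : ∃ q : ℑ X → ℑ Y, ∀ x, q (ι X x) = p x := by
  obtain ⟨q, hq⟩ := (mod X (fun _ => Y)).2 p
  exact ⟨q, congrFun hq⟩

/-- The function type `X → ℑ Y` is a retract of its reflection. -/
theorem exists_eval {ℑ : Type u → Type u} {ι : ∀ A : Type u, A → ℑ A}
    (mod : ∀ (A : Type u) (B : ℑ A → Type u),
      Function.Bijective (fun (s : ∀ a : ℑ A, ℑ (B a)) => fun a : A => s (ι A a)))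
    (X Y : Type u) : ∃ ev : ℑ (X → ℑ Y) → X → ℑ Y, ∀ k, ev (ι _ k) = k := by
  choose q hq using fun x : X => modal_lift mod (fun k : X → ℑ Y => k x)
  exact ⟨fun t x => q x t, fun k => funext fun x => hq x k⟩

/-- A dependent function on the family of function types `E y → ℑ Y`, `y : ℑ X`, extends along the
unit of `X`. -/
theorem modal_lift_pi {ℑ : Type u → Type u} {ι : ∀ A : Type u, A → ℑ A}
    (mod : ∀ (A : Type u) (B : ℑ A → Type u),
      Function.Bijective (fun (s : ∀ a : ℑ A, ℑ (B a)) => fun a : A => s (ι A a)))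
    {X Y : Type u} (E : ℑ X → Type u) (p : ∀ x : X, E (ι X x) → ℑ Y) :
    ∃ g : ∀ y : ℑ X, E y → ℑ Y, ∀ x, g (ι X x) = p x := by
  choose ev hev using fun y => exists_eval mod (E y) Y
  obtain ⟨s, hs⟩ := (mod X (fun y => E y → ℑ Y)).2 (fun x => ι _ (p x))
  refine ⟨fun y => ev y (s y), fun x => ?_⟩
  have h : s (ι X x) = ι _ (p x) := congrFun hs x
  exact (congrArg (ev (ι X x)) h).trans (hev _ _)

/-- Formally étale maps are stable under pullback. -/
theorem statement12 (ℑ : Type u → Type u) (ι : ∀ A : Type u, A → ℑ A)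
    (mod : ∀ (A : Type u) (B : ℑ A → Type u),
      Function.Bijective (fun (s : ∀ a : ℑ A, ℑ (B a)) => fun a : A => s (ι A a)))
    {A B B' : Type u} (f : A → B) (hf : IsEtale ℑ ι f) (ψ : B' → B) :
    IsEtale ℑ ι (fun w : {w : B' × A // ψ w.1 = f w.2} => w.1.1) := by
  intro F hF
  obtain ⟨Ff, hFf⟩ := modal_lift mod (fun a => ι B (f a))
  obtain ⟨Fψ, hFψ⟩ := modal_lift mod (fun b => ι B (ψ b))
  obtain ⟨P, hP⟩ := modal_lift mod
    (fun w : {w : B' × A // ψ w.1 = f w.2} => ι A w.1.2)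
  obtain ⟨hinj, hsurj⟩ := hf Ff hFf
  have inj : ∀ a₁ a₂, ι A a₁ = ι A a₂ → f a₁ = f a₂ → a₁ = a₂ := fun a₁ a₂ h₁ h₂ =>
    hinj (Subtype.ext (Prod.ext h₁ h₂))
  have surj : ∀ (x : ℑ A) (b : B), Ff x = ι B b → ∃ a, ι A a = x ∧ f a = b := by
    intro x b h
    obtain ⟨a, ha⟩ := hsurj ⟨(x, b), h⟩
    have hval := congrArg Subtype.val ha
    exact ⟨a, congrArg Prod.fst hval, congrArg Prod.snd hval⟩
  -- Both sides are maps from the reflection of the pullback into `ℑ B`.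
  have comm : ∀ z, Ff (P z) = Fψ (F z) :=
    modal_ext mod (fun z => Ff (P z)) (fun z => Fψ (F z)) fun w => by
      simp only [hP, hF, hFf, hFψ, w.2]
  choose r hr₁ hr₂ using fun (b' : B') (x : {x : ℑ A // Ff x = Fψ (ι B' b')}) =>
    surj x.1 (ψ b') (x.2.trans (hFψ b'))
  obtain ⟨g, hg⟩ := modal_lift_pi mod (fun y : ℑ B' => {x : ℑ A // Ff x = Fψ y})
    (fun b' x => ι {w : B' × A // ψ w.1 = f w.2} ⟨(b', r b' x), (hr₂ b' x).symm⟩)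
  -- The second argument of `g` has a type depending on the first, so the value of `g` is moved
  -- along equalities of its arguments by substitution.
  have g_val : ∀ (y : ℑ B') (x : {x : ℑ A // Ff x = Fψ y}) (b' : B') (a : A)
      (h : ψ b' = f a), y = ι B' b' → x.1 = ι A a → g y x = ι _ ⟨(b', a), h⟩ := by
    intro y x b' a h hy hx
    subst hy
    have ha : r b' x = a := inj _ _ ((hr₁ b' x).trans hx) ((hr₂ b' x).trans h)
    rw [hg]
    subst ha
    rfl
  have retract : ∀ z, g (F z) ⟨P z, comm z⟩ = z :=
    modal_ext mod (fun z => g (F z) ⟨P z, comm z⟩) id fun w =>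
      g_val _ _ w.1.1 w.1.2 w.2 (hF w) (hP w)
  constructor
  · intro w₁ w₂ h
    have h' := congrArg Subtype.val h
    have h₁ : ι _ w₁ = ι _ w₂ := congrArg Prod.fst h'
    have h₂ : w₁.1.1 = w₂.1.1 := congrArg Prod.snd h'
    have h₃ : ι A w₁.1.2 = ι A w₂.1.2 := by rw [← hP, ← hP, h₁]
    have h₄ : f w₁.1.2 = f w₂.1.2 := by rw [← w₁.2, ← w₂.2, h₂]
    exact Subtype.ext (Prod.ext h₂ (inj _ _ h₃ h₄))
  · rintro ⟨⟨z, b'⟩, hz⟩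
    have hz' : F z = ι B' b' := hz
    obtain ⟨a, ha₁, ha₂⟩ := surj (P z) (ψ b') (by rw [comm, hz', hFψ])
    refine ⟨⟨(b', a), ha₂.symm⟩, Subtype.ext (Prod.ext ?_ rfl)⟩
    exact (g_val (F z) ⟨P z, comm z⟩ b' a ha₂.symm hz' ha₁.symm).symm.trans (retract z)
end

section
/- (a) For every type X : Type u and every point x : X, the inclusion of the formal disk ι_x : 𝔻_x → X given by the first projection is formally étale. (b) More generally, any map between coreduced types is formally étale, and any pullback of a map between coreduced types (i.e. for g : C → D with C, D coreduced and ψ : B → D, the projection {w : B × C // ψ w.1 = g w.2} → B) is formally étale. -/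
/-!
Uniqueness in the modality axiom says that two maps `ℑ A → ℑ T` agreeing on units coincide, and
existence lets every map `A → ℑ T` be extended along the unit.

Formal disks: the unit `X → ℑ X` has `ℑ`-connected fibres, i.e. `ℑ` of a fibre is a subsingleton
(`subsingleton_fiber`). So a point of the pullback for `𝔻_x → X` is determined by its component
`y : X`; the lift `F` is constantly `ι x`, whence `ι y = ι x` and `y` lies in the disk.

Pullbacks `P = B ×_D C` with `C`, `D` coreduced: `ψ` extends to `ψI : ℑ B → ℑ D ≅ D`. The axiom applied
to the family `β ↦ ({c // ψI β = ι (g c)} → ℑ P)` on `ℑ B` gives a map `ℑ B ×_D C → ℑ P` that is a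
left inverse to the comparison map `ℑ P → ℑ B ×_D C`. This exhibits every `w : ℑ P` lying over a
unit `ι b` as the unit of a point of `P`.
-/

universe u

section

variable {ℑ : Type u → Type u} {ι : ∀ A : Type u, A → ℑ A}

theorem modality_ext (mod : IsModality ℑ ι) {A T : Type u} {f g : ℑ A → ℑ T}
    (h : ∀ a, f (ι A a) = g (ι A a)) (w : ℑ A) : f w = g w :=
  congrFun ((mod A (fun _ => T)).1 (funext h)) w

theorem modality_lift (mod : IsModality ℑ ι) {A T : Type u} (f : A → ℑ T) :
    ∃ F : ℑ A → ℑ T, ∀ a, F (ι A a) = f a := by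
  obtain ⟨F, hF⟩ := (mod A (fun _ => T)).2 f
  exact ⟨F, congrFun hF⟩

/-- The unit has `ℑ`-connected fibres. A centre of `ℑ` of each fibre is obtained by extending
the section `a ↦ ι ⟨a, rfl⟩`. -/
theorem subsingleton_fiber (mod : IsModality ℑ ι) {X : Type u} (b : ℑ X) :
    Subsingleton (ℑ {y : X // ι X y = b}) := by
  obtain ⟨s, hs⟩ := (mod X (fun b => {y : X // ι X y = b})).2 (fun a => ι _ ⟨a, rfl⟩)
  have key : ∀ w : ℑ {y : X // ι X y = b}, w = s b := by
    intro w
    refine modality_ext mod (f := fun w => w) (g := fun _ => s b) ?_ w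
    rintro ⟨a, rfl⟩
    exact (congrFun hs a).symm
  exact ⟨fun v w => (key v).trans (key w).symm⟩

theorem isEtale_formalDisk (mod : IsModality ℑ ι) (X : Type u) (x : X) :
    IsEtale ℑ ι (fun d : {y : X // ι X y = ι X x} => d.1) := by
  intro F h
  constructor
  · intro a b hab
    exact Subtype.ext (congrArg (fun w => w.1.2) hab)
  · rintro ⟨⟨w, y⟩, hw⟩
    have hF : F w = ι X x :=
      modality_ext mod (g := fun _ => ι X x) (fun a => (h a).trans a.2) w
    have := subsingleton_fiber mod (ι X x)
    exact ⟨⟨y, hw.symm.trans hF⟩, Subtype.ext (Prod.ext (Subsingleton.elim _ _) rfl)⟩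

/-- Dependent elimination into functions with values in a type `ℑ T`: such function types are
modal, so a section over the units extends to all of `ℑ A`. -/
theorem modality_elim_fun (mod : IsModality ℑ ι) {A T : Type u} (E : ℑ A → Type u)
    (f : ∀ a : A, E (ι A a) → ℑ T) :
    ∃ h : ∀ β : ℑ A, E β → ℑ T, ∀ a e, h (ι A a) e = f a e := by
  obtain ⟨s, hs⟩ := (mod A (fun β => E β → ℑ T)).2 (fun a => ι _ (f a))
  choose ev hev using fun (β : ℑ A) (e : E β) =>
    modality_lift mod (fun k : E β → ℑ T => k e)
  refine ⟨fun β e => ev β e (s β), fun a e => ?_⟩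
  have : s (ι A a) = ι _ (f a) := congrFun hs a
  simp only [this, hev]

theorem isEtale_pullback (mod : IsModality ℑ ι) {B C D : Type u}
    (hC : Function.Bijective (ι C)) (hD : Function.Bijective (ι D)) (g : C → D) (ψ : B → D) :
    IsEtale ℑ ι (fun w : {w : B × C // ψ w.1 = g w.2} => w.1.1) := by
  intro F hF
  obtain ⟨ψI, hψI⟩ := modality_lift mod (fun b => ι D (ψ b))
  obtain ⟨gI, hgI⟩ := modality_lift mod (fun c => ι D (g c))
  obtain ⟨G, hG⟩ := modality_lift mod
    (fun p : {w : B × C // ψ w.1 = g w.2} => ι C p.1.2)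
  have hsq : ∀ w, ψI (F w) = gI (G w) := fun w =>
    modality_ext mod (f := fun w => ψI (F w)) (g := fun w => gI (G w))
      (fun p => by simp only [hF, hG, hψI, hgI, p.2]) w
  constructor
  · rintro ⟨⟨b, c⟩, hp⟩ ⟨⟨b', c'⟩, hp'⟩ heq
    have hb : b = b' := congrArg (fun w => w.1.2) heq
    have hι := congrArg (fun w => G w.1.1) heq
    simp only [hG] at hι
    have hc : c = c' := hC.1 hι
    subst hb hc
    rfl
  · rintro ⟨⟨w, b⟩, hw⟩
    obtain ⟨k, hk⟩ := modality_elim_fun mod (fun β => {c : C // ψI β = ι D (g c)})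
      (fun b c => ι {w : B × C // ψ w.1 = g w.2}
        ⟨(b, c.1), hD.1 ((hψI b).symm.trans c.2)⟩)
    -- The equation `β = ι B b` is kept as a hypothesis so that `k` can be evaluated at `F w`.
    have key : ∀ (b : B) (β : ℑ B) (c : C) (_ : β = ι B b) (hc : ψI β = ι D (g c))
        (hp : ψ b = g c), k β ⟨c, hc⟩ = ι _ ⟨(b, c), hp⟩ := by
      rintro b _ c rfl hc hp
      exact hk b ⟨c, hc⟩
    choose r hr using hC.2
    have hrG : ∀ v, ψI (F v) = ι D (g (r (G v))) := fun v => by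
      rw [hsq, ← hgI, hr]
    have hinv : k (F w) ⟨r (G w), hrG w⟩ = w := by
      refine modality_ext mod (f := fun v => k (F v) ⟨r (G v), hrG v⟩) (g := fun v => v) ?_ w
      intro p
      have hc : r (G (ι _ p)) = p.1.2 := hC.1 (by rw [hr, hG])
      have hp : ψ p.1.1 = g (r (G (ι _ p))) := by rw [hc]; exact p.2
      refine (key p.1.1 _ _ (hF p) (hrG _) hp).trans (congrArg _ ?_)
      exact Subtype.ext (Prod.ext rfl hc)
    have hp : ψ b = g (r (G w)) :=
      hD.1 (by rw [← hrG w, ← hψI b]; exact congrArg ψI hw.symm)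
    refine ⟨⟨(b, r (G w)), hp⟩, Subtype.ext (Prod.ext ?_ rfl)⟩
    exact (key b _ _ hw (hrG w) hp).symm.trans hinv

theorem isEtale_of_coreduced {C D : Type u} (hC : Function.Bijective (ι C))
    (hD : Function.Bijective (ι D)) (g : C → D) : IsEtale ℑ ι g := by
  intro F h
  constructor
  · intro a b hab
    exact hC.1 (congrArg (fun w => w.1.1) hab)
  · rintro ⟨⟨w, d⟩, hw⟩
    obtain ⟨c, rfl⟩ := hC.2 w
    exact ⟨c, Subtype.ext (Prod.ext rfl (hD.1 ((h c).symm.trans hw)))⟩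

end

/-- (a) Formal disk inclusions are formally étale; (b) maps between coreduced
types are formally étale, and pullbacks of maps between coreduced types are
formally étale. -/
theorem statement13 (ℑ : Type u → Type u) (ι : ∀ A : Type u, A → ℑ A)
    (mod : ∀ (A : Type u) (B : ℑ A → Type u),
      Function.Bijective (fun (s : ∀ a : ℑ A, ℑ (B a)) => fun a : A => s (ι A a))) :
    (∀ (X : Type u) (x : X),
      IsEtale ℑ ι (fun d : {y : X // ι X y = ι X x} => d.1)) ∧
    (∀ (C D : Type u), Function.Bijective (ι C) → Function.Bijective (ι D) →
      ∀ g : C → D, IsEtale ℑ ι g) ∧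
    (∀ (B C D : Type u), Function.Bijective (ι C) → Function.Bijective (ι D) →
      ∀ (g : C → D) (ψ : B → D),
        IsEtale ℑ ι (fun w : {w : B × C // ψ w.1 = g w.2} => w.1.1)) := by
  exact ⟨isEtale_formalDisk mod, fun _ _ hC hD g => isEtale_of_coreduced hC hD g,
    fun _ _ _ hC hD g ψ => isEtale_pullback mod hC hD g ψ⟩
end
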